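/- arXiv:1401.6139 — 2 statements merged into one kernel-verified Lean document; each statement's English description precedes it below -/
import Mathlib

section
/- Let k be a commutative ring and n a natural number. Then the homology of the chain complex (K(n)_*, D) vanishes in every positive degree: H_i(K(n)) = 0 for all i > 0. -/
/-!
The proof has two independent parts.

*`D ∘ D = 0`.* A block stands for a left-normed Lie monomial and `D` is the Leibniz differential,
which is determined by `d (ω | y) = (d ω | y) + (-1)^|ω| ω · y`, where `ω · y` is the derivation
action of the bracket `y`. This recursion is taken as the definition of a differential `dFree` on
the free module on all lists of blocks. The action of a single letter commutes with `dFree`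
(`dFree_R`), hence so does the action of any bracket, and `dFree_sq` follows in one line.
Unfolding the recursion yields exactly the sum defining `D` (`dFree_enc`), so `D` is the restriction
of `dFree` along the injection `incl`; here one needs that the terms of `D` on split tuples are
again split tuples (`isSTuple_removeReplace`).

*Contraction.* In a split tuple `0` is the head of `B₀`, and `1` either lies in `B₀` or is the
head of `B₁`. Cutting `(0 u 1 v | …)` into `(0 u | 1 v | …)` is a bijection from the tuples of the
first kind to those of the second kind, one degree higher; let `h` be minus this map, extended by
zero. In `D (0 u | 1 v | …)` the term `i = 0`, `j = 1`, `S = ∅` is `-(0 u 1 v | …)`, the terms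
`i = 0`, `j = 1`, `S ≠ ∅` are of the first kind with fewer entries after `1`, and all others are of
the second kind (`Dmap_key`). So `N = 1 - hD - Dh` strictly decreases a filtration, first by the
length from `1` on in `B₀` and then, within the span of the tuples of the second kind, by the length
of `B₁`. As a cycle `z` is homologous to the cycle `N z`, every cycle of positive degree is a
boundary (`mem_range_of_filtration`).
-/

/-- `IsSTuple n m B`: the family of blocks `B₀, …, Bₘ` is an `m`-split `(n+1)`-tuple:
all blocks are nonempty, their concatenation contains each element of `{0,…,n}` exactly
once, the heads of the blocks are strictly increasing, and the head of each block is
strictly smaller than every other entry of that block. -/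
def IsSTuple (n m : ℕ) (B : Fin (m + 1) → List ℕ) : Prop :=
  (∀ i, B i ≠ []) ∧
  ((List.ofFn B).flatten.Perm (List.range (n + 1))) ∧
  (∀ i j : Fin (m + 1), i < j → (B i).headI < (B j).headI) ∧
  (∀ i : Fin (m + 1), ∀ x ∈ (B i).tail, (B i).headI < x)

/-- The set `STuple(n,m)` of `m`-split `(n+1)`-tuples. -/
structure STuple (n m : ℕ) where
  B : Fin (m + 1) → List ℕ
  prop : IsSTuple n m B

/-- The projection `p` sending `(B₀ | … | Bₘ)` to the concatenation `B₀B₁⋯Bₘ`. -/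
def pval {m : ℕ} (B : Fin (m + 1) → List ℕ) : List ℕ := (List.ofFn B).flatten

/-- `starOp x y S` is the list `x *_S y`: the entries of `x`, followed by the entries
`y_ℓ` for `ℓ ∈ S` in decreasing order of `ℓ`, then `y₀`, then the entries `y_ℓ` for
`ℓ ∈ {1,…,|y|-1} ∖ S` in increasing order of `ℓ`. -/
def starOp (x y : List ℕ) (S : Finset ℕ) : List ℕ :=
  x ++ ((S.sort (· ≤ ·)).reverse.map (fun ℓ => y.getD ℓ 0)) ++
    y.headI :: ((((Finset.Icc 1 (y.length - 1)) \ S).sort (· ≤ ·)).map (fun ℓ => y.getD ℓ 0))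

/-- The family of blocks obtained from `(B₀ | … | B_{m+1})` by replacing `Bᵢ` with
`Bᵢ *_S Bⱼ` and omitting the block `Bⱼ` (for `i < j`). -/
def removeReplace {m : ℕ} (B : Fin (m + 2) → List ℕ) (i j : Fin (m + 2)) (S : Finset ℕ) :
    Fin (m + 1) → List ℕ :=
  fun l => if (l : ℕ) < (j : ℕ) then
      (if (l : ℕ) = (i : ℕ) then starOp (B l.castSucc) (B j) S else B l.castSucc)
    else B l.succ

/-- The degree-`m` part `K(n)_m`: the free `k`-module on `STuple(n,m)`. -/
abbrev Kmod (k : Type*) [CommRing k] (n m : ℕ) : Type _ := STuple n m →₀ k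

open Classical in
/-- The basis element of `K(n)_m` attached to a family of blocks when it is an `m`-split
`(n+1)`-tuple (and `0` otherwise). -/
noncomputable def toBasisK (k : Type*) [CommRing k] (n m : ℕ) (B : Fin (m + 1) → List ℕ) :
    Kmod k n m :=
  if h : IsSTuple n m B then Finsupp.single ⟨B, h⟩ 1 else 0

/-- The map `D : K(n)_{m+1} → K(n)_m`, defined on a basis element `b = (B₀|…|B_{m+1})` by
`D(b) = Σ_{0≤i<j≤m+1} (-1)ʲ Σ_{S ⊆ {1,…,|Bⱼ|-1}} (-1)^{|S|}
  (B₀ | … | Bᵢ₋₁ | Bᵢ *_S Bⱼ | Bᵢ₊₁ | … | B̂ⱼ | … | B_{m+1})`. -/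
noncomputable def Dmap (k : Type*) [CommRing k] (n m : ℕ) :
    Kmod k n (m + 1) →ₗ[k] Kmod k n m :=
  Finsupp.lift (Kmod k n m) k (STuple n (m + 1))
    (fun b => ∑ j : Fin (m + 2), ∑ i : Fin (m + 2),
      if (i : ℕ) < (j : ℕ) then
        ((-1 : ℤ) ^ (j : ℕ)) • ∑ S ∈ (Finset.Icc 1 ((b.B j).length - 1)).powerset,
          ((-1 : ℤ) ^ S.card) • toBasisK k n m (removeReplace b.B i j S)
      else 0)

namespace SplitComplex

open Finsupp

/-! ### The Leibniz differential on the free model -/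

section FreeModel

variable (k : Type*) [CommRing k]

/-- The free model: the free `k`-module on all finite lists of blocks, with no condition on the
blocks. Tuples are listed with their *last* block first, so that appending a block is `cons`. -/
abbrev Free : Type _ := List (List ℕ) →₀ k

/-- Appending the block `z` to a tuple: `ω ↦ (ω | z)`. -/
noncomputable def C (z : List ℕ) : Free k →ₗ[k] Free k :=
  Finsupp.lmapDomain k k (fun L => z :: L)

lemma C_single (z : List ℕ) (L : List (List ℕ)) (a : k) :
    C k z (single L a) = single (z :: L) a := by
  simp [C, Finsupp.lmapDomain_apply]

/-- The values of `R c` on basis elements. -/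
noncomputable def rAux (c : ℕ) : List (List ℕ) → Free k
  | [] => 0
  | z :: L => C k z (rAux c L) + if z = [] then 0 else single ((z ++ [c]) :: L) 1

/-- The right action of the letter `c` as a derivation:
`(B₀ | … | Bₘ) ↦ ∑ᵢ (B₀ | … | Bᵢ c | … | Bₘ)`. Empty blocks, which do not stand for Lie monomials,
are killed; this makes `dFree_R` hold without a nonemptiness condition. -/
noncomputable def R (c : ℕ) : Free k →ₗ[k] Free k :=
  Finsupp.linearCombination k (rAux k c)

/-- The right action of the left-normed bracket `[…[[y₀, y₁], y₂], …]` as a derivation, i.e. the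
corresponding iterated commutator of the operators `R`. On a tuple it is `∑ᵢ` of the replacement of
`Bᵢ` by `∑_S ± Bᵢ *_S y`, see `T_enc`. -/
noncomputable def T : List ℕ → (Free k →ₗ[k] Free k)
  | [] => 0
  | h :: t => t.foldl (fun X c => R k c ∘ₗ X - X ∘ₗ R k c) (R k h)

/-- The values of `dFree` on basis elements: `d (ω | y) = (d ω | y) + (-1)^|ω| ω · y`. -/
noncomputable def dAux : List (List ℕ) → Free k
  | [] => 0
  | y :: L => C k y (dAux L) + T k y (single L ((-1 : k) ^ L.length))

/-- The Leibniz differential on the free model; `dFree_enc` identifies it with `Dmap`. -/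
noncomputable def dFree : Free k →ₗ[k] Free k :=
  Finsupp.linearCombination k (dAux k)

/-- The sign operator `ω ↦ (-1)^|ω| ω`. -/
noncomputable def sgn : Free k →ₗ[k] Free k :=
  Finsupp.linearCombination k (fun L => single L ((-1 : k) ^ L.length))

/-- Two operators agreeing on the empty tuple, and for which agreement propagates along
appending a block, are equal. -/
lemma op_ext (X Y : Free k →ₗ[k] Free k) (h0 : X (single [] 1) = Y (single [] 1))
    (hs : ∀ (z : List ℕ) (x : Free k), X x = Y x → X (C k z x) = Y (C k z x)) : X = Y := by
  ext L : 2
  simp only [LinearMap.comp_apply, Finsupp.lsingle_apply]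
  induction L with
  | nil => exact h0
  | cons z L ih => simpa [C_single] using hs z _ ih

lemma T_snoc (y : List ℕ) (hy : y ≠ []) (c : ℕ) (x : Free k) :
    T k (y ++ [c]) x = R k c (T k y x) - T k y (R k c x) := by
  cases y with
  | nil => exact absurd rfl hy
  | cons h t => simp [T, List.foldl_append]

lemma R_C (c : ℕ) (z : List ℕ) (hz : z ≠ []) (x : Free k) :
    R k c (C k z x) = C k z (R k c x) + C k (z ++ [c]) x := by
  have : R k c ∘ₗ C k z = C k z ∘ₗ R k c + C k (z ++ [c]) := by
    ext L : 2
    simp [R, rAux, hz, C_single]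
  exact LinearMap.congr_fun this x

lemma R_C_nil (c : ℕ) (x : Free k) : R k c (C k [] x) = C k [] (R k c x) := by
  have : R k c ∘ₗ C k [] = C k [] ∘ₗ R k c := by
    ext L : 2
    simp [R, rAux, C_single]
  exact LinearMap.congr_fun this x

lemma dFree_C (z : List ℕ) (x : Free k) :
    dFree k (C k z x) = C k z (dFree k x) + T k z (sgn k x) := by
  have : dFree k ∘ₗ C k z = C k z ∘ₗ dFree k + T k z ∘ₗ sgn k := by
    ext L : 2
    simp [dFree, dAux, sgn, C_single]
  exact LinearMap.congr_fun this x

lemma sgn_C (z : List ℕ) (x : Free k) : sgn k (C k z x) = -C k z (sgn k x) := by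
  have : sgn k ∘ₗ C k z = -(C k z ∘ₗ sgn k) := by
    ext L : 2
    simp [sgn, pow_succ, C_single]
  exact LinearMap.congr_fun this x

lemma R_nil (c : ℕ) (a : k) : R k c (single [] a) = 0 := by simp [R, rAux]
lemma dFree_nil (a : k) : dFree k (single [] a) = 0 := by simp [dFree, dAux]
lemma sgn_nil : sgn k (single [] 1) = single [] 1 := by simp [sgn]

lemma T_nil_tuple (y : List ℕ) (a : k) : T k y (single [] a) = 0 := by
  induction y using List.reverseRecOn with
  | nil => simp [T]
  | append_singleton y c ih =>
    by_cases hy : y = []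
    · subst hy; simp [T, R_nil]
    · simp [T_snoc k y hy, ih, R_nil]

lemma sgn_R (c : ℕ) (x : Free k) : sgn k (R k c x) = R k c (sgn k x) := by
  suffices h : sgn k ∘ₗ R k c = R k c ∘ₗ sgn k from LinearMap.congr_fun h x
  apply op_ext
  · simp [R_nil, sgn_nil]
  intro z x hx
  simp only [LinearMap.comp_apply] at *
  by_cases hz : z = []
  · subst hz
    simp only [R_C_nil, sgn_C, map_neg, hx]
  · simp only [R_C k c z hz, sgn_C, map_neg, map_add, hx, neg_add]

/-- An operator commuting with every `R c` commutes with every `T y`. -/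
lemma comm_T {X : Free k →ₗ[k] Free k} (hX : ∀ c x, X (R k c x) = R k c (X x)) (y : List ℕ) :
    ∀ x, X (T k y x) = T k y (X x) := by
  induction y using List.reverseRecOn with
  | nil => intro x; simp [T]
  | append_singleton y c ih =>
    intro x
    by_cases hy : y = []
    · subst hy; exact hX c x
    · simp only [T_snoc k y hy, map_sub, hX, ih]

/-- The differential commutes with the derivation action. By induction on the number of blocks this
reduces to `T (z c) = [R c, T z]`. -/
lemma dFree_R (c : ℕ) (x : Free k) : dFree k (R k c x) = R k c (dFree k x) := by
  suffices h : dFree k ∘ₗ R k c = R k c ∘ₗ dFree k from LinearMap.congr_fun h x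
  apply op_ext
  · simp [R_nil, dFree_nil]
  intro z x hx
  simp only [LinearMap.comp_apply] at *
  by_cases hz : z = []
  · subst hz
    simp only [R_C_nil, dFree_C, map_add, hx, T, LinearMap.zero_apply, map_zero]
  · simp only [R_C k c z hz, dFree_C, map_add, hx, T_snoc k z hz, sgn_R]
    abel

lemma sgn_dFree (x : Free k) : sgn k (dFree k x) = -dFree k (sgn k x) := by
  suffices h : sgn k ∘ₗ dFree k = -(dFree k ∘ₗ sgn k) from LinearMap.congr_fun h x
  apply op_ext
  · simp [dFree_nil, sgn_nil]
  intro z x hx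
  simp only [LinearMap.comp_apply, LinearMap.neg_apply] at *
  simp only [dFree_C, sgn_C, map_add, map_neg, hx, comm_T k (sgn_R k)]
  abel

theorem dFree_sq (x : Free k) : dFree k (dFree k x) = 0 := by
  suffices h : dFree k ∘ₗ dFree k = 0 from LinearMap.congr_fun h x
  apply op_ext
  · simp [dFree_nil]
  intro z x hx
  simp only [LinearMap.comp_apply, LinearMap.zero_apply] at *
  simp only [dFree_C, map_add, hx, comm_T k (dFree_R k), sgn_dFree, map_neg, map_zero]
  abel

end FreeModel

/-! ### Expansion of the free differential -/

section Star

variable (k : Type*) [CommRing k]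

lemma sort_insert_max (S : Finset ℕ) (q : ℕ) (h : ∀ x ∈ S, x < q) :
    (insert q S).sort (· ≤ ·) = S.sort (· ≤ ·) ++ [q] := by
  have hq : q ∉ S := fun hh => lt_irrefl _ (h q hh)
  refine List.Perm.eq_of_pairwise' (r := (· ≤ ·)) (Finset.pairwise_sort _ _) ?_ ?_
  · rw [List.pairwise_append]
    refine ⟨Finset.pairwise_sort _ _, by simp, ?_⟩
    intro a ha b hb
    simp at ha hb
    subst hb
    exact (h a ha).le
  · rw [← Multiset.coe_eq_coe, Finset.sort_eq, ← Multiset.coe_add, Finset.sort_eq,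
      Finset.insert_val_of_notMem hq]
    rw [add_comm]; rfl

lemma mem_powerset_Icc {S : Finset ℕ} {q : ℕ} (hS : S ∈ (Finset.Icc 1 q).powerset) :
    ∀ x ∈ S, 1 ≤ x ∧ x ≤ q := fun x hx => by
  simpa using Finset.mem_powerset.1 hS hx

lemma map_getD_snoc (y : List ℕ) (c : ℕ) (l : List ℕ) (h : ∀ x ∈ l, x < y.length) :
    l.map (fun ℓ => (y ++ [c]).getD ℓ 0) = l.map (fun ℓ => y.getD ℓ 0) := by
  apply List.map_congr_left
  intro x hx
  exact List.getD_append _ _ _ _ (h x hx)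

lemma headI_append {y : List ℕ} (hy : y ≠ []) (l : List ℕ) : (y ++ l).headI = y.headI := by
  cases y with
  | nil => exact absurd rfl hy
  | cons a t => rfl

/-- The last entry of `y c` stays last when its index is not in `S`. -/
lemma starOp_snoc_out (x y : List ℕ) (hy : y ≠ []) (c : ℕ) (S : Finset ℕ)
    (hS : S ∈ (Finset.Icc 1 (y.length - 1)).powerset) :
    starOp x (y ++ [c]) S = starOp x y S ++ [c] := by
  have hl : 0 < y.length := List.length_pos_iff.2 hy
  have hm := mem_powerset_Icc hS
  have e : Finset.Icc 1 ((y ++ [c]).length - 1) \ S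
      = insert y.length (Finset.Icc 1 (y.length - 1) \ S) := by
    ext a
    simp only [List.length_append, List.length_singleton, Finset.mem_sdiff, Finset.mem_Icc,
      Finset.mem_insert]
    constructor
    · rintro ⟨h1, h2⟩
      by_cases ha : a = y.length
      · exact Or.inl ha
      · exact Or.inr ⟨by omega, h2⟩
    · rintro (h | ⟨h1, h2⟩)
      · exact ⟨by omega, fun h' => by have := hm a h'; omega⟩
      · exact ⟨by omega, h2⟩
  unfold starOp
  rw [e, sort_insert_max, List.map_append, map_getD_snoc, map_getD_snoc, headI_append hy]
  · simp
  · intro a ha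
    simp at ha
    omega
  · intro a ha
    simp at ha
    have := hm a ha; omega
  · intro a ha
    simp at ha
    omega

/-- The last entry of `y c` comes right after `x` when its index is in `S`. -/
lemma starOp_snoc_in (x y : List ℕ) (hy : y ≠ []) (c : ℕ) (S : Finset ℕ)
    (hS : S ∈ (Finset.Icc 1 (y.length - 1)).powerset) :
    starOp x (y ++ [c]) (insert y.length S) = starOp (x ++ [c]) y S := by
  have hl : 0 < y.length := List.length_pos_iff.2 hy
  have hm := mem_powerset_Icc hS
  have e : Finset.Icc 1 ((y ++ [c]).length - 1) \ (insert y.length S)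
      = Finset.Icc 1 (y.length - 1) \ S := by
    ext a
    simp only [List.length_append, List.length_singleton, Finset.mem_sdiff, Finset.mem_Icc,
      Finset.mem_insert]
    constructor
    · rintro ⟨h1, h2⟩
      push Not at h2
      exact ⟨by omega, h2.2⟩
    · rintro ⟨h1, h2⟩
      exact ⟨by omega, by push Not; exact ⟨by omega, h2⟩⟩
  unfold starOp
  rw [e, sort_insert_max S _ (fun a ha => by have := hm a ha; omega), List.reverse_append,
    List.map_append, map_getD_snoc y c (S.sort (· ≤ ·)).reverse, map_getD_snoc y c (Finset.sort _ _),
    headI_append hy]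
  · simp
  · intro a ha
    simp at ha
    omega
  · intro a ha
    simp at ha
    have := hm a ha; omega

/-- The signed sum over `S` satisfies the recursion `x * [y, c] = (x * y) c - (x c) * y`. -/
lemma sum_star_snoc {M : Type*} [AddCommGroup M] (f : List ℕ → M) (x y : List ℕ) (hy : y ≠ [])
    (c : ℕ) :
    ∑ S ∈ (Finset.Icc 1 ((y ++ [c]).length - 1)).powerset,
        ((-1 : ℤ) ^ S.card) • f (starOp x (y ++ [c]) S)
      = ∑ S ∈ (Finset.Icc 1 (y.length - 1)).powerset,
          ((-1 : ℤ) ^ S.card) • f (starOp x y S ++ [c])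
        - ∑ S ∈ (Finset.Icc 1 (y.length - 1)).powerset,
          ((-1 : ℤ) ^ S.card) • f (starOp (x ++ [c]) y S) := by
  have hl : 0 < y.length := List.length_pos_iff.2 hy
  have e : Finset.Icc 1 ((y ++ [c]).length - 1)
      = insert y.length (Finset.Icc 1 (y.length - 1)) := by
    ext a
    simp only [List.length_append, List.length_singleton, Finset.mem_Icc, Finset.mem_insert]
    omega
  have hn : y.length ∉ Finset.Icc 1 (y.length - 1) := by simp; omega
  rw [e, Finset.sum_powerset_insert hn, sub_eq_add_neg, ← Finset.sum_neg_distrib]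
  congr 1
  · refine Finset.sum_congr rfl fun S hS => ?_
    rw [starOp_snoc_out x y hy c S hS]
  · refine Finset.sum_congr rfl fun S hS => ?_
    rw [starOp_snoc_in x y hy c S hS, Finset.card_insert_of_notMem, pow_succ]
    · simp
    · exact fun h => hn (Finset.mem_powerset.1 hS h)

lemma starOp_ne_nil (x y : List ℕ) (S : Finset ℕ) : starOp x y S ≠ [] := by
  simp [starOp]

/-- The action of a bracket is a derivation, acting on the last block by `∑_S ± z *_S y`. -/
lemma T_C (y : List ℕ) (hy : y ≠ []) : ∀ (z : List ℕ) (_ : z ≠ []) (x : Free k),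
    T k y (C k z x) = C k z (T k y x) +
      ∑ S ∈ (Finset.Icc 1 (y.length - 1)).powerset,
        ((-1 : ℤ) ^ S.card) • C k (starOp z y S) x := by
  induction y using List.reverseRecOn with
  | nil => exact absurd rfl hy
  | append_singleton y c ih =>
    intro z hz x
    by_cases hy' : y = []
    · subst hy'
      simp [T, R_C k c z hz, starOp]
    · rw [sum_star_snoc (fun w => C k w x) z y hy' c]
      simp only [T_snoc k y hy', R_C k c z hz, ih hy' z hz, ih hy' (z ++ [c]) (by simp), map_add,
        map_sub, map_sum, map_zsmul, R_C k c _ (starOp_ne_nil _ _ _), smul_add,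
        Finset.sum_add_distrib]
      abel

/-- The list of blocks of a family, last block first. -/
def enc {m : ℕ} (B : Fin m → List ℕ) : List (List ℕ) := (List.ofFn B).reverse

lemma enc_succ {m : ℕ} (B : Fin (m + 1) → List ℕ) :
    enc B = B (Fin.last m) :: enc (fun i => B i.castSucc) := by
  rw [enc, List.ofFn_succ', List.concat_eq_append, List.reverse_append]
  rfl

lemma enc_length {m : ℕ} (B : Fin m → List ℕ) : (enc B).length = m := by simp [enc]

lemma enc_injective {m : ℕ} : Function.Injective (enc (m := m)) := by
  intro A B h
  exact List.ofFn_injective (List.reverse_injective h)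

lemma T_enc {y : List ℕ} (hy : y ≠ []) : ∀ {m : ℕ} (B : Fin m → List ℕ) (_ : ∀ i, B i ≠ []) (a : k),
    T k y (single (enc B) a) = ∑ i, ∑ S ∈ (Finset.Icc 1 (y.length - 1)).powerset,
      ((-1 : ℤ) ^ S.card) • single (enc (Function.update B i (starOp (B i) y S))) a := by
  intro m
  induction m with
  | zero => intro B _ a; simp [enc, T_nil_tuple]
  | succ m ih =>
    intro B hB a
    rw [enc_succ, ← C_single, T_C k y hy _ (hB _), ih _ (fun i => hB _), Fin.sum_univ_castSucc]
    simp only [map_sum, map_zsmul, C_single]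
    congr 1
    · refine Finset.sum_congr rfl fun i _ => Finset.sum_congr rfl fun S _ => ?_
      rw [enc_succ (Function.update _ _ _)]
      congr 4
      · rw [Function.update_of_ne (Fin.castSucc_lt_last i).ne']
      · funext l
        by_cases h : l = i
        · subst h; simp
        · rw [Function.update_of_ne h, Function.update_of_ne]
          simpa using h
    · refine Finset.sum_congr rfl fun S _ => ?_
      rw [enc_succ (Function.update _ _ _)]
      congr 4
      · simp
      · funext l
        rw [Function.update_of_ne (Fin.castSucc_lt_last l).ne]

lemma removeReplace_last {m : ℕ} (B : Fin (m + 2) → List ℕ) (i : Fin (m + 1)) (S : Finset ℕ) :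
    removeReplace B i.castSucc (Fin.last (m + 1)) S
      = Function.update (fun l : Fin (m + 1) => B l.castSucc) i
          (starOp (B i.castSucc) (B (Fin.last (m + 1))) S) := by
  funext l
  by_cases h : l = i
  · subst h
    have : (l : ℕ) < m + 1 := l.2
    simp only [removeReplace, Fin.val_last, Fin.val_castSucc, this, if_true, Function.update_self]
  · rw [Function.update_of_ne h]
    have : (l : ℕ) ≠ i := fun h' => h (Fin.ext h')
    have h2 : (l : ℕ) < m + 1 := l.2
    simp only [removeReplace, Fin.val_last, Fin.val_castSucc, this, h2, if_true, if_false]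

lemma enc_removeReplace {m : ℕ} (B : Fin (m + 3) → List ℕ) (i j : Fin (m + 2)) (S : Finset ℕ) :
    enc (removeReplace B i.castSucc j.castSucc S)
      = B (Fin.last (m + 2)) :: enc (removeReplace (fun l => B l.castSucc) i j S) := by
  rw [enc_succ]
  congr 1
  have : ¬ (m + 1 < (j : ℕ)) := by omega
  simp [removeReplace, this]

/-- The recursively defined differential is given by the sum which defines `Dmap`. -/
lemma dFree_enc : ∀ {m : ℕ} (B : Fin (m + 2) → List ℕ) (_ : ∀ i, B i ≠ []),
    dFree k (single (enc B) 1) = ∑ j : Fin (m + 2), ∑ i : Fin (m + 2),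
      if (i : ℕ) < (j : ℕ) then
        ((-1 : ℤ) ^ (j : ℕ)) • ∑ S ∈ (Finset.Icc 1 ((B j).length - 1)).powerset,
          ((-1 : ℤ) ^ S.card) • (single (enc (removeReplace B i j S)) (1 : k))
      else 0 := by
  -- The terms with `j` the last index are those of `T`.
  have key : ∀ {m : ℕ} (B : Fin (m + 2) → List ℕ) (_ : ∀ i, B i ≠ []),
      dFree k (single (enc B) 1) =
        C k (B (Fin.last (m + 1))) (dFree k (single (enc (fun l => B l.castSucc)) 1)) +
        ∑ i : Fin (m + 2), if (i : ℕ) < m + 1 then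
          ((-1 : ℤ) ^ (m + 1)) •
            ∑ S ∈ (Finset.Icc 1 ((B (Fin.last (m + 1))).length - 1)).powerset,
            ((-1 : ℤ) ^ S.card) • (single (enc (removeReplace B i (Fin.last (m + 1)) S)) (1 : k))
        else 0 := by
    intro m B hB
    rw [enc_succ B, ← C_single, dFree_C]
    congr 1
    have : sgn k (single (enc fun i : Fin (m + 1) => B i.castSucc) 1)
        = ((-1 : ℤ) ^ (m + 1)) • single (enc fun i : Fin (m + 1) => B i.castSucc) 1 := by
      simp [sgn, enc_length]
    rw [this, map_zsmul, T_enc k (hB _) _ (fun i => hB _)]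
    refine (?_ : _ = _).trans (Fin.sum_univ_castSucc _).symm
    simp only [Fin.val_last, Fin.val_castSucc, lt_irrefl, if_false, add_zero, Fin.is_lt, if_true,
      removeReplace_last, Finset.smul_sum]
  intro m
  induction m with
  | zero =>
    intro B hB
    rw [key B hB, Fin.sum_univ_two (fun j : Fin 2 => ∑ i : Fin 2, _)]
    rw [enc_succ (fun l : Fin 1 => B l.castSucc), ← C_single, dFree_C]
    simp [enc, dFree_nil, sgn_nil, T_nil_tuple]
  | succ m ih =>
    intro B hB
    rw [key B hB, ih _ (fun i => hB _)]
    refine (?_ : _ = _).trans (Fin.sum_univ_castSucc _).symm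
    congr 1
    rw [map_sum]
    refine Finset.sum_congr rfl fun j _ => ?_
    refine (?_ : _ = _).trans (Fin.sum_univ_castSucc _).symm
    rw [map_sum]
    have : ¬ (m + 2 < (j : ℕ)) := by omega
    simp only [Fin.val_last, Fin.val_castSucc, this, if_false, add_zero]
    refine Finset.sum_congr rfl fun i _ => ?_
    split_ifs with hij
    · simp only [map_zsmul, map_sum, C_single, enc_removeReplace B i j]
    · simp

end Star

/-! ### The terms of the differential are split tuples -/

section Validity

lemma starOp_perm (x y : List ℕ) (hy : y ≠ []) (S : Finset ℕ)
    (hS : S ∈ (Finset.Icc 1 (y.length - 1)).powerset) : (starOp x y S).Perm (x ++ y) := by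
  have hsub := Finset.mem_powerset.1 hS
  unfold starOp
  rw [List.append_assoc]
  refine List.Perm.append_left x ?_
  refine List.perm_middle.trans ?_
  cases y with
  | nil => exact absurd rfl hy
  | cons a t =>
    refine List.Perm.cons _ ?_
    rw [← Multiset.coe_eq_coe, ← Multiset.coe_add, ← Multiset.map_coe, ← Multiset.map_coe,
      Multiset.coe_reverse, Finset.sort_eq, Finset.sort_eq, ← Multiset.map_add]
    have e : S.val + (Finset.Icc 1 ((a :: t).length - 1) \ S).val
        = (Finset.Icc 1 ((a :: t).length - 1)).val := by
      rw [Finset.sdiff_val]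
      exact add_tsub_cancel_of_le (Finset.val_le_iff.2 hsub)
    rw [e]
    have e2 : (Finset.Icc 1 ((a :: t).length - 1)).val
        = ((List.range t.length).map (· + 1) : Multiset ℕ) := by
      rw [← Multiset.map_coe, Multiset.coe_range, ← Finset.range_val]
      have : Finset.Icc 1 ((a :: t).length - 1)
          = (Finset.range t.length).map ⟨(· + 1), add_left_injective 1⟩ := by
        ext b
        simp only [List.length_cons, Finset.mem_Icc, Finset.mem_map, Finset.mem_range,
          Function.Embedding.coeFn_mk]
        constructor
        · intro h; exact ⟨b - 1, by omega, by omega⟩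
        · rintro ⟨c, h1, h2⟩; omega
      rw [this]; rfl
    rw [e2, Multiset.map_coe, List.map_map]
    congr 1
    apply List.ext_getElem
    · simp
    · intro i h1 h2
      simp [h2]

lemma removeReplace_apply {m : ℕ} (B : Fin (m + 2) → List ℕ) (i j : Fin (m + 2)) (S : Finset ℕ)
    (l : Fin (m + 1)) (hij : i < j) :
    removeReplace B i j S l = if (l : ℕ) = i then starOp (B (j.succAbove l)) (B j) S
      else B (j.succAbove l) := by
  have hij' : (i : ℕ) < j := hij
  unfold removeReplace
  by_cases h : (l : ℕ) < j
  · rw [Fin.succAbove_of_castSucc_lt j l (by exact h)]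
    simp [h]
  · rw [Fin.succAbove_of_le_castSucc j l (by rw [Fin.le_def]; simpa using h)]
    have : (l : ℕ) ≠ i := by omega
    simp [h, this]

lemma succAbove_self_of_lt {m : ℕ} {i j : Fin (m + 2)} {l : Fin (m + 1)} (hij : i < j)
    (hl : (l : ℕ) = i) : j.succAbove l = i := by
  rw [Fin.succAbove_of_castSucc_lt j l (by rw [Fin.lt_def]; simpa [hl] using hij)]
  exact Fin.ext hl

lemma count_flatten_ofFn {m : ℕ} (B : Fin m → List ℕ) (a : ℕ) :
    (List.ofFn B).flatten.count a = ∑ i, (B i).count a := by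
  rw [List.count_flatten, List.map_ofFn, List.sum_ofFn]
  rfl

lemma IsSTuple.headI_le {n m : ℕ} {B : Fin (m + 1) → List ℕ} (h : IsSTuple n m B)
    {i : Fin (m + 1)} {x : ℕ} (hx : x ∈ B i) : (B i).headI ≤ x := by
  have h4 := h.2.2.2 i
  cases hb : B i with
  | nil => simp [hb] at hx
  | cons a t =>
    rw [hb] at hx h4
    rcases List.mem_cons.1 hx with rfl | hx
    · exact le_rfl
    · exact (h4 x hx).le

theorem isSTuple_removeReplace {n m : ℕ} {B : Fin (m + 2) → List ℕ} (h : IsSTuple n (m + 1) B)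
    {i j : Fin (m + 2)} (hij : i < j) {S : Finset ℕ}
    (hS : S ∈ (Finset.Icc 1 ((B j).length - 1)).powerset) :
    IsSTuple n m (removeReplace B i j S) := by
  have hhead : ∀ l, (removeReplace B i j S l).headI = (B (j.succAbove l)).headI := by
    intro l
    rw [removeReplace_apply B i j S l hij]
    split_ifs
    · rw [starOp, List.append_assoc, headI_append (h.1 _)]
    · rfl
  refine ⟨?_, ?_, ?_, ?_⟩
  · intro l
    rw [removeReplace_apply B i j S l hij]
    split_ifs
    · exact starOp_ne_nil _ _ _
    · exact h.1 _
  · refine List.Perm.trans ?_ h.2.1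
    rw [List.perm_iff_count]
    intro a
    rw [count_flatten_ofFn, count_flatten_ofFn, Fin.sum_univ_succAbove _ j]
    have : ∀ l : Fin (m + 1), (removeReplace B i j S l).count a
        = (if l = (⟨i, by have := j.2; omega⟩ : Fin (m + 1)) then (B j).count a else 0)
          + (B (j.succAbove l)).count a := by
      intro l
      rw [removeReplace_apply B i j S l hij]
      simp only [Fin.ext_iff]
      split_ifs with hl
      · rw [(starOp_perm _ _ (h.1 j) S hS).count_eq, List.count_append, add_comm]
      · simp
    simp only [this, Finset.sum_add_distrib]
    simp
  · intro l l' hl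
    rw [hhead, hhead]
    exact h.2.2.1 _ _ (Fin.strictMono_succAbove j hl)
  · intro l x hx
    rw [hhead]
    rw [removeReplace_apply B i j S l hij] at hx
    split_ifs at hx with hl
    · have hne := h.1 (j.succAbove l)
      have e : (starOp (B (j.succAbove l)) (B j) S).tail.Perm ((B (j.succAbove l)).tail ++ B j) := by
        have := starOp_perm (B (j.succAbove l)) (B j) (h.1 j) S hS
        cases hb : B (j.succAbove l) with
        | nil => exact absurd hb hne
        | cons a t =>
          rw [hb] at this
          simpa [starOp] using this
      rcases List.mem_append.1 (e.mem_iff.1 hx) with hx | hx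
      · exact h.2.2.2 _ x hx
      · rw [succAbove_self_of_lt hij hl]
        exact (h.2.2.1 i j hij).trans_le (IsSTuple.headI_le h hx)
    · exact h.2.2.2 _ x hx

end Validity

/-! ### The square of the differential -/

section Square

variable (k : Type*) [CommRing k]

lemma Dmap_single (n m : ℕ) (b : STuple n (m + 1)) :
    Dmap k n m (single b 1) = ∑ j : Fin (m + 2), ∑ i : Fin (m + 2),
      if (i : ℕ) < (j : ℕ) then
        ((-1 : ℤ) ^ (j : ℕ)) • ∑ S ∈ (Finset.Icc 1 ((b.B j).length - 1)).powerset,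
          ((-1 : ℤ) ^ S.card) • toBasisK k n m (removeReplace b.B i j S)
      else 0 := by
  simp [Dmap, Finsupp.lift_apply]

lemma toBasisK_of {n m : ℕ} {B : Fin (m + 1) → List ℕ} (h : IsSTuple n m B) :
    toBasisK k n m B = single ⟨B, h⟩ 1 := by
  simp [toBasisK, h]

/-- The inclusion of `K(n)_m` into the free model. -/
noncomputable def incl (n m : ℕ) : Kmod k n m →ₗ[k] Free k :=
  Finsupp.lmapDomain k k (fun b : STuple n m => enc b.B)

lemma incl_injective (n m : ℕ) : Function.Injective (incl k n m) := by
  apply Finsupp.mapDomain_injective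
  rintro ⟨A, hA⟩ ⟨B, hB⟩ h
  have := enc_injective h
  simp only at this
  subst this
  rfl

lemma incl_single (n m : ℕ) (b : STuple n m) (a : k) :
    incl k n m (single b a) = single (enc b.B) a := by
  simp [incl, Finsupp.lmapDomain_apply]

lemma incl_Dmap (n m : ℕ) (x : Kmod k n (m + 1)) :
    incl k n m (Dmap k n m x) = dFree k (incl k n (m + 1) x) := by
  suffices h : incl k n m ∘ₗ Dmap k n m = dFree k ∘ₗ incl k n (m + 1) from
    LinearMap.congr_fun h x
  ext b : 2
  simp only [LinearMap.comp_apply, Finsupp.lsingle_apply]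
  rw [Dmap_single, incl_single, dFree_enc k _ b.prop.1]
  simp only [map_sum]
  refine Finset.sum_congr rfl fun j _ => Finset.sum_congr rfl fun i _ => ?_
  split_ifs with hij
  · simp only [map_zsmul, map_sum]
    congr 1
    refine Finset.sum_congr rfl fun S hS => ?_
    rw [toBasisK_of k (isSTuple_removeReplace b.prop hij hS), incl_single]
  · simp

theorem Dmap_Dmap (n m : ℕ) (x : Kmod k n (m + 2)) :
    Dmap k n m (Dmap k n (m + 1) x) = 0 := by
  apply incl_injective
  rw [incl_Dmap, incl_Dmap, dFree_sq, map_zero]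

end Square

/-! ### The position of the entry `1` -/

section Structure

lemma IsSTuple.nodup {n m : ℕ} {B : Fin (m + 1) → List ℕ} (h : IsSTuple n m B)
    (i : Fin (m + 1)) : (B i).Nodup := by
  have := (h.2.1.nodup_iff).2 List.nodup_range
  rw [List.nodup_flatten] at this
  exact this.1 _ (List.mem_ofFn.2 ⟨i, rfl⟩)

lemma IsSTuple.index_unique {n m : ℕ} {B : Fin (m + 1) → List ℕ} (h : IsSTuple n m B)
    {i j : Fin (m + 1)} {x : ℕ} (hi : x ∈ B i) (hj : x ∈ B j) : i = j := by
  have := (h.2.1.nodup_iff).2 List.nodup_range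
  rw [List.nodup_flatten, List.pairwise_ofFn] at this
  rcases lt_trichotomy i j with hlt | heq | hlt
  · exact absurd hj (this.2 hlt hi)
  · exact heq
  · exact absurd hi (this.2 hlt hj)

lemma IsSTuple.exists_index {n m : ℕ} {B : Fin (m + 1) → List ℕ} (h : IsSTuple n m B)
    {x : ℕ} (hx : x ≤ n) : ∃ i, x ∈ B i := by
  have : x ∈ (List.ofFn B).flatten := h.2.1.mem_iff.2 (by simp; omega)
  obtain ⟨l, hl, hxl⟩ := List.mem_flatten.1 this
  obtain ⟨i, rfl⟩ := List.mem_ofFn.1 hl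
  exact ⟨i, hxl⟩

lemma IsSTuple.length_le {n m : ℕ} {B : Fin (m + 1) → List ℕ} (h : IsSTuple n m B)
    (i : Fin (m + 1)) : (B i).length ≤ n + 1 := by
  have h1 := h.2.1.length_eq
  rw [List.length_range] at h1
  rw [← h1]
  exact (List.sublist_flatten_of_mem (List.mem_ofFn.2 ⟨i, rfl⟩)).length_le

lemma headI_mem {l : List ℕ} (h : l ≠ []) : l.headI ∈ l := by
  cases l with
  | nil => exact absurd rfl h
  | cons a t => simp

lemma IsSTuple.head_zero {n m : ℕ} {B : Fin (m + 1) → List ℕ} (h : IsSTuple n m B) :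
    (B 0).headI = 0 := by
  obtain ⟨i, hi⟩ := IsSTuple.exists_index h (Nat.zero_le n)
  have h0 := IsSTuple.headI_le h hi
  rcases (Fin.zero_le i).eq_or_lt with rfl | hlt
  · omega
  · have := h.2.2.1 0 i hlt
    omega

lemma IsSTuple.head_pos {n m : ℕ} {B : Fin (m + 1) → List ℕ} (h : IsSTuple n m B)
    {i : Fin (m + 1)} (hi : 0 < i) : 0 < (B i).headI :=
  (Nat.zero_le _).trans_lt (h.2.2.1 0 i hi)

lemma IsSTuple.head_one {n m : ℕ} {B : Fin (m + 2) → List ℕ} (h : IsSTuple n (m + 1) B)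
    (h1 : 1 ∉ B 0) : (B 1).headI = 1 := by
  have hpos := IsSTuple.head_pos h (i := 1) (by simp)
  have hn : 1 ≤ n := by
    have := h.2.1.mem_iff.1 (List.mem_flatten.2 ⟨B 1, List.mem_ofFn.2 ⟨1, rfl⟩, headI_mem (h.1 1)⟩)
    simp at this
    omega
  obtain ⟨i, hi⟩ := IsSTuple.exists_index h hn
  have hle := IsSTuple.headI_le h hi
  have hi0 : i ≠ 0 := by rintro rfl; exact h1 hi
  have hge : 1 ≤ i := by
    rw [Fin.le_def]; simp
    exact Nat.pos_of_ne_zero fun h' => hi0 (Fin.ext h')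
  rcases hge.eq_or_lt with rfl | hlt
  · omega
  · have := h.2.2.1 1 i hlt
    omega

lemma starOp_empty (x y : List ℕ) (hy : y ≠ []) : starOp x y ∅ = x ++ y := by
  induction y using List.reverseRecOn with
  | nil => exact absurd rfl hy
  | append_singleton y c ih =>
    by_cases hy' : y = []
    · subst hy'; simp [starOp]
    · rw [starOp_snoc_out x y hy' c ∅ (by simp), ih hy', List.append_assoc]

/-- The part of a block before the entry `1`. -/
def before (l : List ℕ) : List ℕ := l.takeWhile (fun x => decide (x ≠ 1))

/-- The part of a block from the entry `1` on. -/
def from1 (l : List ℕ) : List ℕ := l.dropWhile (fun x => decide (x ≠ 1))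

lemma before_append_from1 (l : List ℕ) : before l ++ from1 l = l :=
  List.takeWhile_append_dropWhile

lemma one_notMem_before (l : List ℕ) : 1 ∉ before l := fun h => by
  simpa using List.mem_takeWhile_imp h

lemma before_append {x y : List ℕ} (hx : 1 ∉ x) (hy : y ≠ []) (h1 : y.headI = 1) :
    before (x ++ y) = x := by
  cases y with
  | nil => exact absurd rfl hy
  | cons a t =>
    simp only [List.headI_cons] at h1
    subst h1
    rw [before, List.takeWhile_append_of_pos]
    · simp
    · intro a ha
      have : a ≠ 1 := by rintro rfl; exact hx ha
      simpa using this

lemma from1_append {x y : List ℕ} (hx : 1 ∉ x) (hy : y ≠ []) (h1 : y.headI = 1) :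
    from1 (x ++ y) = y := by
  have h := before_append_from1 (x ++ y)
  rw [before_append hx hy h1] at h
  exact List.append_cancel_left h

lemma from1_eq_cons {l : List ℕ} (h : 1 ∈ l) : ∃ t, from1 l = 1 :: t := by
  have hne : from1 l ≠ [] := by
    intro h0
    have := before_append_from1 l
    rw [h0, List.append_nil] at this
    exact one_notMem_before l (by rwa [this])
  have := List.head_dropWhile_not (fun x => decide (x ≠ 1)) hne
  cases hc : from1 l with
  | nil => exact absurd hc hne
  | cons a t =>
    refine ⟨t, ?_⟩
    have h2 : (from1 l).head hne = a := by simp [hc]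
    unfold from1 at h2
    rw [h2] at this
    simp at this
    rw [this]

/-- Cutting the first block just before the entry `1`:
`(0 u 1 v | B₁ | …) ↦ (0 u | 1 v | B₁ | …)`. -/
def splitFam {m : ℕ} (B : Fin (m + 1) → List ℕ) : Fin (m + 2) → List ℕ :=
  Fin.cons (before (B 0)) (Fin.cons (from1 (B 0)) (fun i : Fin m => B i.succ))

lemma splitFam_zero {m : ℕ} (B : Fin (m + 1) → List ℕ) : splitFam B 0 = before (B 0) := rfl

lemma splitFam_one {m : ℕ} (B : Fin (m + 1) → List ℕ) : splitFam B 1 = from1 (B 0) := rfl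

lemma splitFam_succ {m : ℕ} (B : Fin (m + 1) → List ℕ) (i : Fin m) :
    splitFam B i.succ.succ = B i.succ := rfl

theorem isSTuple_splitFam {n m : ℕ} {B : Fin (m + 1) → List ℕ} (h : IsSTuple n m B)
    (h1 : 1 ∈ B 0) : IsSTuple n (m + 1) (splitFam B) := by
  obtain ⟨t, ht⟩ := from1_eq_cons h1
  have hB := before_append_from1 (B 0)
  have hz := IsSTuple.head_zero h
  have hbne : before (B 0) ≠ [] := by
    intro h0
    rw [h0, List.nil_append, ht] at hB
    rw [← hB] at hz
    simp at hz
  have hb0 : (before (B 0)).headI = 0 := by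
    have := headI_append hbne (from1 (B 0))
    rw [hB] at this
    exact this.symm.trans hz
  have htail : ∀ x ∈ (before (B 0)).tail ++ from1 (B 0), 0 < x := by
    intro x hx
    have := h.2.2.2 0 x
    rw [hz, ← hB, List.tail_append_of_ne_nil hbne] at this
    exact this hx
  have hsucc : ∀ i : Fin m, 1 < (B i.succ).headI := by
    intro i
    have hp := IsSTuple.head_pos h (Fin.succ_pos i)
    have hne : (B i.succ).headI ≠ 1 := by
      intro he
      have := IsSTuple.index_unique h h1 (he ▸ headI_mem (h.1 i.succ))
      exact absurd this (Fin.succ_ne_zero i).symm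
    omega
  refine ⟨?_, ?_, ?_, ?_⟩
  · intro i
    refine Fin.cases hbne (fun i => Fin.cases ?_ (fun i => ?_) i) i
    · show from1 (B 0) ≠ []
      simp [ht]
    · exact h.1 _
  · refine List.Perm.trans (List.Perm.of_eq ?_) h.2.1
    rw [List.ofFn_succ, List.ofFn_succ, List.ofFn_succ, List.flatten_cons, List.flatten_cons,
      List.flatten_cons, ← List.append_assoc]
    congr 1
  · intro i j hij
    induction i using Fin.cases with
    | zero =>
      rw [splitFam_zero, hb0]
      induction j using Fin.cases with
      | zero => exact absurd hij (lt_irrefl _)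
      | succ j =>
        induction j using Fin.cases with
        | zero => show 0 < (from1 (B 0)).headI; simp [ht]
        | succ j => exact zero_lt_one.trans (hsucc j)
    | succ i =>
      induction j using Fin.cases with
      | zero => exact absurd hij (Fin.not_lt_zero _)
      | succ j =>
        rw [Fin.succ_lt_succ_iff] at hij
        induction j using Fin.cases with
        | zero => exact absurd hij (Fin.not_lt_zero _)
        | succ j =>
          induction i using Fin.cases with
          | zero => show (from1 (B 0)).headI < (B j.succ).headI; simpa [ht] using hsucc j
          | succ i => exact h.2.2.1 _ _ hij
  · intro i x hx
    induction i using Fin.cases with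
    | zero =>
      rw [splitFam_zero] at hx ⊢
      rw [hb0]
      exact htail x (List.mem_append_left _ hx)
    | succ i =>
      induction i using Fin.cases with
      | zero =>
        change x ∈ (from1 (B 0)).tail at hx
        show (from1 (B 0)).headI < x
        have hnd := IsSTuple.nodup h 0
        rw [← hB] at hnd
        have hnd' := (List.nodup_append.1 hnd).2.1
        have hp := htail x (List.mem_append_right _ (List.mem_of_mem_tail hx))
        rw [ht] at hx hnd' ⊢
        simp only [List.tail_cons, List.headI_cons] at hx ⊢
        have : x ≠ 1 := by
          rintro rfl
          exact (List.nodup_cons.1 hnd').1 hx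
        omega
      | succ i => exact h.2.2.2 _ x hx

lemma removeReplace_splitFam {m : ℕ} (B : Fin (m + 1) → List ℕ) (h1 : 1 ∈ B 0) :
    removeReplace (splitFam B) 0 1 ∅ = B := by
  obtain ⟨t, ht⟩ := from1_eq_cons h1
  funext l
  induction l using Fin.cases with
  | zero =>
    have : removeReplace (splitFam B) 0 1 ∅ 0
        = starOp (before (B 0)) (from1 (B 0)) ∅ := by
      simp [removeReplace, splitFam_zero, splitFam_one]
    rw [this, starOp_empty _ _ (by simp [ht]), before_append_from1]
  | succ l => simp [removeReplace, splitFam_succ]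

lemma removeReplace_zero_one {m : ℕ} (B : Fin (m + 2) → List ℕ) (S : Finset ℕ) :
    removeReplace B 0 1 S 0 = starOp (B 0) (B 1) S := by
  simp [removeReplace]

lemma splitFam_removeReplace {n m : ℕ} {B : Fin (m + 2) → List ℕ} (h : IsSTuple n (m + 1) B)
    (h1 : 1 ∉ B 0) : splitFam (removeReplace B 0 1 ∅) = B := by
  have hh := IsSTuple.head_one h h1
  funext l
  induction l using Fin.cases with
  | zero =>
    rw [splitFam_zero, removeReplace_zero_one, starOp_empty _ _ (h.1 1),
      before_append h1 (h.1 1) hh]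
  | succ l =>
    induction l using Fin.cases with
    | zero =>
      show from1 (removeReplace B 0 1 ∅ 0) = B 1
      rw [removeReplace_zero_one, starOp_empty _ _ (h.1 1), from1_append h1 (h.1 1) hh]
    | succ l =>
      rw [splitFam_succ]
      simp [removeReplace]

lemma from1_starOp_length {n m : ℕ} {B : Fin (m + 2) → List ℕ} (h : IsSTuple n (m + 1) B)
    (h1 : 1 ∉ B 0) {S : Finset ℕ} (hS : S ∈ (Finset.Icc 1 ((B 1).length - 1)).powerset)
    (hne : S ≠ ∅) : (from1 (starOp (B 0) (B 1) S)).length < (B 1).length := by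
  have hh := IsSTuple.head_one h h1
  have hm := mem_powerset_Icc hS
  have hlen : 0 < (B 1).length := List.length_pos_iff.2 (h.1 1)
  unfold starOp
  rw [from1_append _ (by simp) (by simpa using hh)]
  · rw [List.length_cons, List.length_map, Finset.length_sort,
      Finset.card_sdiff_of_subset (Finset.mem_powerset.1 hS), Nat.card_Icc]
    have := Finset.card_pos.2 (Finset.nonempty_iff_ne_empty.2 hne)
    have hle := Finset.card_le_card (Finset.mem_powerset.1 hS)
    rw [Nat.card_Icc] at hle
    omega
  · intro hmem
    rcases List.mem_append.1 hmem with hmem | hmem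
    · exact h1 hmem
    · simp only [List.mem_map, List.mem_reverse, Finset.mem_sort] at hmem
      obtain ⟨ℓ, hℓ, he⟩ := hmem
      have h3 := hm ℓ hℓ
      have h4 := h.2.2.2 1
      rw [hh] at h4
      have hlt : ℓ < (B 1).length := by omega
      rw [List.getD_eq_getElem _ _ hlt] at he
      have := h4 ((B 1)[ℓ]) (by
        rw [List.mem_iff_getElem]
        refine ⟨ℓ - 1, by simp; omega, ?_⟩
        rw [List.getElem_tail]
        congr 1
        omega)
      omega

lemma one_notMem_removeReplace {n m : ℕ} {B : Fin (m + 2) → List ℕ} (h : IsSTuple n (m + 1) B)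
    (h1 : 1 ∉ B 0) {i j : Fin (m + 2)} (hij : i < j) (hj : j ≠ 1) {S : Finset ℕ}
    (hS : S ∈ (Finset.Icc 1 ((B j).length - 1)).powerset) : 1 ∉ removeReplace B i j S 0 := by
  have hj0 : j ≠ 0 := fun h0 => by subst h0; exact absurd hij (Fin.not_lt_zero _)
  have h1j : 1 ∉ B j := by
    intro hm
    have h11 : 1 ∈ B 1 := by
      have := headI_mem (h.1 1)
      rwa [IsSTuple.head_one h h1] at this
    exact hj (IsSTuple.index_unique h hm h11)
  rw [removeReplace_apply B i j S 0 hij, Fin.succAbove_ne_zero_zero hj0]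
  split_ifs
  · rw [(starOp_perm _ _ (h.1 j) S hS).mem_iff]
    simp [h1, h1j]
  · exact h1

end Structure

/-! ### The contraction -/

section Contraction

variable (k : Type*) [CommRing k]

/-- The homotopy `h`: `(0 u 1 v | B₁ | …) ↦ -(0 u | 1 v | B₁ | …)`, and `0` on the tuples whose
first block does not contain `1`. -/
noncomputable def hmap (n m : ℕ) : Kmod k n m →ₗ[k] Kmod k n (m + 1) :=
  Finsupp.linearCombination k
    (fun b : STuple n m => if 1 ∈ b.B 0 then -toBasisK k n (m + 1) (splitFam b.B) else 0)

lemma hmap_single_of_mem {n m : ℕ} (b : STuple n m) (h1 : 1 ∈ b.B 0) :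
    hmap k n m (single b 1) = -single ⟨splitFam b.B, isSTuple_splitFam b.prop h1⟩ 1 := by
  simp [hmap, h1, toBasisK_of k (isSTuple_splitFam b.prop h1)]

lemma hmap_single_of_notMem {n m : ℕ} (b : STuple n m) (h1 : 1 ∉ b.B 0) :
    hmap k n m (single b 1) = 0 := by
  simp [hmap, h1]

/-- The span of the tuples with `1 ∉ B₀` and of the tuples `(0 u 1 v | …)` with `|1 v| < s`. -/
noncomputable def FA (n m s : ℕ) : Submodule k (Kmod k n m) :=
  Submodule.span k ((fun b : STuple n m => single b (1 : k)) ''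
    {b | 1 ∈ b.B 0 → (from1 (b.B 0)).length < s})

/-- The span of the tuples `(0 u | 1 v | …)` with `|1 v| < s`. -/
noncomputable def FB (n m s : ℕ) : Submodule k (Kmod k n (m + 1)) :=
  Submodule.span k ((fun b : STuple n (m + 1) => single b (1 : k)) ''
    {b | 1 ∉ b.B 0 ∧ (b.B 1).length < s})

lemma single_mem_FA {n m s : ℕ} (b : STuple n m)
    (h : 1 ∈ b.B 0 → (from1 (b.B 0)).length < s) : single b (1 : k) ∈ FA k n m s :=
  Submodule.subset_span ⟨b, h, rfl⟩

lemma single_mem_FB {n m s : ℕ} (b : STuple n (m + 1))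
    (h1 : 1 ∉ b.B 0) (h : (b.B 1).length < s) : single b (1 : k) ∈ FB k n m s :=
  Submodule.subset_span ⟨b, ⟨h1, h⟩, rfl⟩

lemma FA_mono {n m s t : ℕ} (h : s ≤ t) : FA k n m s ≤ FA k n m t :=
  Submodule.span_mono (Set.image_mono fun _ hb h1 => (hb h1).trans_le h)

lemma FB_mono {n m s t : ℕ} (h : s ≤ t) : FB k n m s ≤ FB k n m t :=
  Submodule.span_mono (Set.image_mono fun _ hb => ⟨hb.1, hb.2.trans_le h⟩)

lemma FB_le_FA (n m s t : ℕ) : FB k n m s ≤ FA k n (m + 1) t :=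
  Submodule.span_mono (Set.image_mono fun _ hb h1 => absurd h1 hb.1)

lemma FA_zero_le (n m : ℕ) : FA k n (m + 1) 0 ≤ FB k n m (n + 2) :=
  Submodule.span_mono (Set.image_mono fun b hb =>
    ⟨fun h1 => Nat.not_lt_zero _ (hb h1), Nat.lt_succ_of_le (IsSTuple.length_le b.prop 1)⟩)

lemma mem_FA_top {n m : ℕ} (z : Kmod k n m) : z ∈ FA k n m (n + 2) := by
  induction z using Finsupp.induction_linear with
  | zero => exact zero_mem _
  | add x y hx hy => exact add_mem hx hy
  | single b a =>
    rw [← mul_one a, ← smul_eq_mul, ← Finsupp.smul_single]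
    refine Submodule.smul_mem _ _ (single_mem_FA k b fun _ => Nat.lt_succ_of_le ?_)
    exact (List.dropWhile_suffix _).length_le.trans (IsSTuple.length_le b.prop 0)

lemma hmap_FA {n m s : ℕ} {z : Kmod k n m} (hz : z ∈ FA k n m s) :
    hmap k n m z ∈ FB k n m s := by
  suffices h : FA k n m s ≤ (FB k n m s).comap (hmap k n m) from h hz
  refine Submodule.span_le.2 ?_
  rintro _ ⟨b, hb, rfl⟩
  show hmap k n m (single b 1) ∈ FB k n m s
  by_cases h1 : 1 ∈ b.B 0
  · rw [hmap_single_of_mem k b h1]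
    exact neg_mem (single_mem_FB k _ (one_notMem_before _) (hb h1))
  · rw [hmap_single_of_notMem k b h1]
    exact zero_mem _

/-- `D (0 u | 1 v | …) = -(0 u 1 v | …)` up to tuples of the form `(0 u' 1 v' | …)` with `v'` shorter
than `v` and tuples with `1 ∉ B₀`. -/
lemma Dmap_key {n m : ℕ} (b : STuple n (m + 1)) (h1 : 1 ∉ b.B 0) :
    Dmap k n m (single b 1) + toBasisK k n m (removeReplace b.B 0 1 ∅)
      ∈ FA k n m (b.B 1).length := by
  have e0 : ∀ x y z : Kmod k n m, x + y + z = x + z + y := add_right_comm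
  -- Isolate `j = 1`, for which only `i = 0` contributes, and there the term `S = ∅`.
  rw [Dmap_single, ← Finset.add_sum_erase _ _ (Finset.mem_univ (1 : Fin (m + 2))),
    Finset.sum_eq_single (0 : Fin (m + 2)), e0]
  · refine add_mem ?_ (sum_mem fun j hj => sum_mem fun i _ => ?_)
    · rw [if_pos (by simp), ← Finset.add_sum_erase _ _ (Finset.empty_mem_powerset _)]
      have e : ∀ x y : Kmod k n m,
          (-1 : ℤ) ^ ((1 : Fin (m + 2)) : ℕ) • ((-1 : ℤ) ^ (∅ : Finset ℕ).card • x + y) + x = -y := by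
        intro x y; simp
      rw [e]
      refine neg_mem (sum_mem fun S hS => zsmul_mem ?_ _)
      obtain ⟨hne, hS⟩ := Finset.mem_erase.1 hS
      rw [toBasisK_of k (isSTuple_removeReplace b.prop (by simp) hS)]
      refine single_mem_FA k _ fun _ => ?_
      show (from1 (removeReplace b.B 0 1 S 0)).length < _
      rw [removeReplace_zero_one]
      exact from1_starOp_length b.prop h1 hS hne
    · split_ifs with hij
      · refine zsmul_mem (sum_mem fun S hS => zsmul_mem ?_ _) _
        rw [toBasisK_of k (isSTuple_removeReplace b.prop hij hS)]
        refine single_mem_FA k _ fun hmem => ?_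
        exact absurd hmem
          (one_notMem_removeReplace b.prop h1 hij (Finset.ne_of_mem_erase hj) hS)
      · exact zero_mem _
  · intro i _ hi
    rw [if_neg]
    have : (i : ℕ) ≠ 0 := fun h => hi (Fin.ext h)
    simp
    omega
  · simp

/-- The defect `1 - hD - Dh` of `h` from being a contraction. -/
noncomputable def N (n m : ℕ) : Kmod k n (m + 1) →ₗ[k] Kmod k n (m + 1) :=
  LinearMap.id - hmap k n m ∘ₗ Dmap k n m - Dmap k n (m + 1) ∘ₗ hmap k n (m + 1)

lemma N_single_of_notMem {n m : ℕ} (b : STuple n (m + 1)) (h1 : 1 ∉ b.B 0) :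
    N k n m (single b 1) ∈ FB k n m (b.B 1).length := by
  have hS : ∅ ∈ (Finset.Icc 1 ((b.B 1).length - 1)).powerset := Finset.empty_mem_powerset _
  have key := hmap_FA k (Dmap_key k b h1)
  have hv := isSTuple_removeReplace b.prop (i := 0) (j := 1) (by simp) hS
  have hm : 1 ∈ removeReplace b.B 0 1 ∅ 0 := by
    rw [removeReplace_zero_one, starOp_empty _ _ (b.prop.1 1)]
    have := headI_mem (b.prop.1 1)
    rw [IsSTuple.head_one b.prop h1] at this
    exact List.mem_append_right _ this
  have hs : (⟨splitFam (removeReplace b.B 0 1 ∅), isSTuple_splitFam hv hm⟩ : STuple n (m + 1))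
      = b := by
    cases b
    simp only [STuple.mk.injEq]
    exact splitFam_removeReplace (by assumption) h1
  rw [map_add, toBasisK_of k hv, hmap_single_of_mem k _ hm, hs] at key
  have e : N k n m (single b 1)
      = -(hmap k n m (Dmap k n m (single b 1)) + -single b 1) := by
    simp only [N, LinearMap.sub_apply, LinearMap.comp_apply, LinearMap.id_apply,
      hmap_single_of_notMem k b h1, map_zero]
    abel
  rw [e]
  exact neg_mem key

lemma N_single_of_mem {n m : ℕ} (b : STuple n (m + 1)) (h1 : 1 ∈ b.B 0) :
    N k n m (single b 1) ∈ FA k n (m + 1) (from1 (b.B 0)).length := by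
  have hv := isSTuple_splitFam b.prop h1
  have key := Dmap_key k ⟨splitFam b.B, hv⟩ (one_notMem_before _)
  simp only [removeReplace_splitFam b.B h1] at key
  rw [toBasisK_of k b.prop] at key
  have e : N k n m (single b 1)
      = (Dmap k n (m + 1) (single ⟨splitFam b.B, hv⟩ 1) + single b 1)
        - hmap k n m (Dmap k n m (single b 1)) := by
    simp only [N, LinearMap.sub_apply, LinearMap.comp_apply, LinearMap.id_apply,
      hmap_single_of_mem k b h1, map_neg]
    abel
  rw [e]
  exact sub_mem key (FB_le_FA k n m _ _ (hmap_FA k (mem_FA_top k _)))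

lemma N_FB {n m s : ℕ} {z : Kmod k n (m + 1)} (hz : z ∈ FB k n m (s + 1)) :
    N k n m z ∈ FB k n m s := by
  suffices h : FB k n m (s + 1) ≤ (FB k n m s).comap (N k n m) from h hz
  refine Submodule.span_le.2 ?_
  rintro _ ⟨b, ⟨h1, hb⟩, rfl⟩
  exact FB_mono k (Nat.le_of_lt_succ hb) (N_single_of_notMem k b h1)

lemma N_FA {n m s : ℕ} {z : Kmod k n (m + 1)} (hz : z ∈ FA k n (m + 1) (s + 1)) :
    N k n m z ∈ FA k n (m + 1) s := by
  suffices h : FA k n (m + 1) (s + 1) ≤ (FA k n (m + 1) s).comap (N k n m) from h hz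
  refine Submodule.span_le.2 ?_
  rintro _ ⟨b, hb, rfl⟩
  by_cases h1 : 1 ∈ b.B 0
  · exact FA_mono k (Nat.le_of_lt_succ (hb h1)) (N_single_of_mem k b h1)
  · exact FB_le_FA k n m _ _ (N_single_of_notMem k b h1)

/-- Cycles are pushed down a filtration which `N` decreases, as a cycle `z` is homologous to the
cycle `N z`. -/
lemma mem_range_of_filtration {n m : ℕ} (G : ℕ → Submodule k (Kmod k n (m + 1)))
    (hN : ∀ s z, z ∈ G (s + 1) → N k n m z ∈ G s)
    (h0 : ∀ z ∈ G 0, Dmap k n m z = 0 → z ∈ LinearMap.range (Dmap k n (m + 1))) :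
    ∀ s, ∀ z ∈ G s, Dmap k n m z = 0 → z ∈ LinearMap.range (Dmap k n (m + 1)) := by
  intro s
  induction s with
  | zero => exact h0
  | succ s ih =>
    intro z hz hd
    have e : z = N k n m z + Dmap k n (m + 1) (hmap k n (m + 1) z) := by
      simp [N, hd]
    have hd' : Dmap k n m (N k n m z) = 0 := by
      simp [N, hd, Dmap_Dmap]
    rw [e]
    exact add_mem (ih _ (hN s z hz) hd') ⟨_, rfl⟩

end Contraction

end SplitComplex

/-- Proposition 4.1 of Hoffbeck–Vespa (vanishing of the Leibniz homology of the
projective generators): the homology of the chain complex `(K(n)_*, D)` vanishes in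
every positive degree, i.e. for every `m`, the kernel of `D : K(n)_{m+1} → K(n)_m`
equals the image of `D : K(n)_{m+2} → K(n)_{m+1}`. -/
theorem K_homology_vanishes (k : Type*) [CommRing k] (n : ℕ) :
    ∀ m : ℕ, LinearMap.ker (Dmap k n m) = LinearMap.range (Dmap k n (m + 1)) := by
  intro m
  apply le_antisymm
  -- `FB 0 = 0` starts the second filtration, whose top contains the bottom `FA 0` of the first.
  · have hB := SplitComplex.mem_range_of_filtration k (SplitComplex.FB k n m)
      (fun s z => SplitComplex.N_FB k) (fun z hz _ => by
        have hz0 : z = 0 := by simpa [SplitComplex.FB] using hz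
        exact hz0 ▸ zero_mem _)
    have hA := SplitComplex.mem_range_of_filtration k (SplitComplex.FA k n (m + 1))
      (fun s z => SplitComplex.N_FA k)
      (fun z hz => hB (n + 2) z (SplitComplex.FA_zero_le k n m hz))
    exact fun z hz => hA (n + 2) z (SplitComplex.mem_FA_top k z) hz
  · rintro _ ⟨z, rfl⟩
    exact SplitComplex.Dmap_Dmap k n m z
end

section
/- Let k be a nontrivial commutative ring and n ≥ 1. In the free Lie algebra over k on the set {0,1,…,n-1}, the family of (n-1)! elements leftComb(ι(0), ι(σ(1)), …, ι(σ(n-1))) = [[…[[ι(0), ι(σ(1))], ι(σ(2))],…], ι(σ(n-1))], indexed by the permutations σ of {1,…,n-1}, is linearly independent over k. -/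
/-!
Let `T` be the free associative algebra on `x₀, …, x_{m-1}`. The `2 × 2` matrices over `T` satisfy
`[a E₁₂, x E₂₂] = (a x) E₁₂`, because `E₂₂ E₁₂ = 0`. Hence the Lie algebra homomorphism sending the
generator `0` to `E₁₂` and the generator `i + 1` to `xᵢ E₂₂` maps the left comb indexed by `σ` to
`(x_{σ 0} ⋯ x_{σ (m-1)}) E₁₂`. Distinct permutations give distinct words, and words are
linearly independent in `T`.
-/

/-- The left-comb iterated bracket: `leftComb a [b₁,…,bₚ] = [[…[[a,b₁],b₂],…],bₚ]`. -/
def leftComb {L : Type*} [LieRing L] (a : L) (l : List L) : L :=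
  l.foldl (fun x y => ⁅x, y⁆) a

theorem linearIndependent_words (k : Type*) [CommRing k] (X : Type*) :
    LinearIndependent k (fun l : List X => (l.map (FreeAlgebra.ι k)).prod) := by
  have h := (FreeAlgebra.basisFreeMonoid k X).linearIndependent.comp
    (FreeMonoid.ofList : List X → FreeMonoid X) FreeMonoid.ofList.injective
  convert h using 2 with l
  simp [FreeAlgebra.basisFreeMonoid, FreeAlgebra.equivMonoidAlgebraFreeMonoid]

attribute [local instance 100] LieRing.ofAssociativeRing

/-- The Lie algebra homomorphism `0 ↦ E₁₂`, `i + 1 ↦ xᵢ E₂₂` into `2 × 2` matrices over the free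
associative algebra on `x₀, …, x_{m-1}`. -/
noncomputable def combRep (k : Type*) [CommRing k] (m : ℕ) :
    FreeLieAlgebra k (Fin (m + 1)) →ₗ⁅k⁆ Matrix (Fin 2) (Fin 2) (FreeAlgebra k (Fin m)) :=
  FreeLieAlgebra.lift k
    (Fin.cons (Matrix.single 0 1 1) fun i => Matrix.single 1 1 (FreeAlgebra.ι k i))

theorem lie_single_single {T : Type*} [Ring T] (a x : T) :
    ⁅(Matrix.single 0 1 a : Matrix (Fin 2) (Fin 2) T),
        (Matrix.single 1 1 x : Matrix (Fin 2) (Fin 2) T)⁆ =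
      Matrix.single 0 1 (a * x) := by
  simp [Ring.lie_def]

/-- The statement is generalized from `a = 1` so that induction on the word applies. -/
theorem combRep_leftComb (k : Type*) [CommRing k] (m : ℕ) (l : List (Fin m))
    (y : FreeLieAlgebra k (Fin (m + 1))) (a : FreeAlgebra k (Fin m))
    (hy : combRep k m y = Matrix.single 0 1 a) :
    combRep k m (leftComb y (l.map fun i => FreeLieAlgebra.of k i.succ)) =
      Matrix.single 0 1 (a * (l.map (FreeAlgebra.ι k)).prod) := by
  induction l generalizing y a with
  | nil => simpa [leftComb] using hy
  | cons i l ih =>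
    have hi : combRep k m ⁅y, FreeLieAlgebra.of k i.succ⁆ =
        Matrix.single 0 1 (a * FreeAlgebra.ι k i) := by
      rw [LieHom.map_lie, hy, ← lie_single_single]
      simp [combRep]
    simpa [leftComb, mul_assoc] using ih _ _ hi

/-- For a nontrivial commutative ring `k` and `n = m + 1 ≥ 1`, in the free Lie algebra
over `k` on the set `{0,1,…,n-1} = Fin (m+1)`, the `(n-1)!` left-comb elements
`[[…[[ι(0), ι(σ(1))], ι(σ(2))],…], ι(σ(n-1))]`, indexed by the permutations `σ` of
`{1,…,n-1}`, are linearly independent over `k`. -/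
theorem leftComb_linearIndependent (k : Type*) [CommRing k] [Nontrivial k] (m : ℕ) :
    LinearIndependent k (fun σ : Equiv.Perm (Fin m) =>
      leftComb (FreeLieAlgebra.of k (0 : Fin (m + 1)))
        (List.ofFn fun i : Fin m => FreeLieAlgebra.of k ((σ i).succ))) := by
  have hinj : Function.Injective (fun σ : Equiv.Perm (Fin m) => List.ofFn σ) := fun σ τ h =>
    Equiv.coe_fn_injective (List.ofFn_injective h)
  -- Independence may be tested after applying `combRep` and reading off the upper right entry.
  refine LinearIndependent.of_comp
    ((Matrix.entryLinearMap k (FreeAlgebra k (Fin m)) (0 : Fin 2) (1 : Fin 2)).comp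
      (combRep k m : FreeLieAlgebra k (Fin (m + 1)) →ₗ[k] _)) ?_
  convert (linearIndependent_words k (Fin m)).comp _ hinj using 1
  · funext σ
    have h := combRep_leftComb k m (List.ofFn σ) (FreeLieAlgebra.of k 0) 1 (by simp [combRep])
    rw [List.map_ofFn] at h
    have h' := congrFun (congrFun h 0) 1
    simpa [Function.comp_def] using h'
  -- The two `k`-module structures on the free algebra, via its Lie structure and directly, agree.
  · rfl
end
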